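/- Let V ⊆ ℝ^d be a linear subspace and let φ and ψ be line polynomials in non-parallel directions v_1 and v_2 respectively, and assume span_ℝ(v_1, v_2) ∩ V = {0}. If c' : ℤ^d → ℂ is a V-periodic function with ψc' = 0, then there exists c : ℤ^d → ℂ such that φc = c', ψc = 0, and c is V-periodic. Moreover, if c' takes only integer values and φ is a difference polynomial, then c can be chosen with integer values. -/

import Mathlib

namespace PaperFormal

/-- View an integer vector inside `ℝ^d`. -/
def intVecR {d : ℕ} (u : Fin d → ℤ) : Fin d → ℝ := fun i => (u i : ℝ)

/-- View an integer vector inside `ℚ^d`. -/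
def intVecQ {d : ℕ} (u : Fin d → ℤ) : Fin d → ℚ := fun i => (u i : ℚ)

/-- A (Laurent) polynomial: a finitely supported integer-valued function on `ℤ^d`. -/
def IsPoly {d : ℕ} (f : (Fin d → ℤ) → ℤ) : Prop := (Function.support f).Finite

/-- The product `(fc)(u) = ∑_v f(v) · c(u − v)` of a polynomial `f` with `c : ℤ^d → ℤ`. -/
noncomputable def polyApply {d : ℕ} (f : (Fin d → ℤ) → ℤ) (c : (Fin d → ℤ) → ℤ) :
    (Fin d → ℤ) → ℤ := fun u => ∑ᶠ v, f v * c (u - v)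

/-- The product `(fc)(u) = ∑_v f(v) · c(u − v)` of a polynomial `f` with `c : ℤ^d → ℂ`. -/
noncomputable def polyApplyC {d : ℕ} (f : (Fin d → ℤ) → ℤ) (c : (Fin d → ℤ) → ℂ) :
    (Fin d → ℤ) → ℂ := fun u => ∑ᶠ v, (f v : ℂ) * c (u - v)

/-- `c` is `v`-periodic: `c(u + v) = c(u)` for all `u`. -/
def Periodic {d : ℕ} (c : (Fin d → ℤ) → ℤ) (v : Fin d → ℤ) : Prop := ∀ u, c (u + v) = c u

/-- `c : ℤ^d → ℂ` is `v`-periodic. -/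
def PeriodicC {d : ℕ} (c : (Fin d → ℤ) → ℂ) (v : Fin d → ℤ) : Prop := ∀ u, c (u + v) = c u

/-- `c` is `k`-periodic: it has `k` periods that are linearly independent over `ℚ`. -/
def KPeriodic {d : ℕ} (k : ℕ) (c : (Fin d → ℤ) → ℤ) : Prop :=
  ∃ v : Fin k → (Fin d → ℤ),
    (LinearIndependent ℚ fun i => intVecQ (v i)) ∧ ∀ i, Periodic c (v i)

/-- `c` is strongly periodic: it is `d`-periodic. -/
def StronglyPeriodic {d : ℕ} (c : (Fin d → ℤ) → ℤ) : Prop := KPeriodic d c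

/-- `c : ℤ^d → ℂ` is strongly periodic. -/
def StronglyPeriodicC {d : ℕ} (c : (Fin d → ℤ) → ℂ) : Prop :=
  ∃ v : Fin d → (Fin d → ℤ),
    (LinearIndependent ℚ fun i => intVecQ (v i)) ∧ ∀ i, PeriodicC c (v i)

/-- Two nonzero integer vectors are non-parallel if they are linearly independent over `ℚ`. -/
def NonParallel {d : ℕ} (v w : Fin d → ℤ) : Prop :=
  LinearIndependent ℚ ![intVecQ v, intVecQ w]

/-- A line polynomial in direction `v`: a polynomial whose support contains at least two points
and is contained in `u + ℚv` for some `u ∈ ℤ^d`. -/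
def IsLinePoly {d : ℕ} (f : (Fin d → ℤ) → ℤ) (v : Fin d → ℤ) : Prop :=
  IsPoly f ∧ v ≠ 0 ∧ 2 ≤ (Function.support f).ncard ∧
    ∃ u : Fin d → ℤ, ∀ w ∈ Function.support f, ∃ q : ℚ, intVecQ w = intVecQ u + q • intVecQ v

/-- The difference polynomial `X^v − 1`: value `1` at `v`, value `−1` at `0`, and `0` elsewhere. -/
def diffPoly {d : ℕ} (v : Fin d → ℤ) : (Fin d → ℤ) → ℤ :=
  fun u => if u = v then 1 else if u = 0 then -1 else 0

/-- `c : ℤ^d → ℂ` is periodic in direction `v`: it is `kv`-periodic for some nonzero integer `k`. -/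
def PeriodicInDirC {d : ℕ} (c : (Fin d → ℤ) → ℂ) (v : Fin d → ℤ) : Prop :=
  ∃ k : ℤ, k ≠ 0 ∧ PeriodicC c (k • v)

/-- `c : ℤ^d → ℂ` is `V`-periodic for a linear subspace `V ⊆ ℝ^d`: it is periodic in
direction `v` for every nonzero integer vector `v` lying in `V`. -/
def VPeriodicC {d : ℕ} (V : Submodule ℝ (Fin d → ℝ)) (c : (Fin d → ℤ) → ℂ) : Prop :=
  ∀ v : Fin d → ℤ, v ≠ 0 → intVecR v ∈ V → PeriodicInDirC c v

/-- The discrete cube `C_m + t`. -/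
def cube {d : ℕ} (m : ℕ) (t : Fin d → ℤ) : Set (Fin d → ℤ) :=
  {u | ∀ i, |u i - t i| ≤ (m : ℤ)}

/-- `c : ℤ^d → ℤ` is sparse: for some positive integer `a`,
`|supp(c) ∩ (C_m + t)| ≤ a·m` for all positive `m` and all `t`. -/
def Sparse {d : ℕ} (c : (Fin d → ℤ) → ℤ) : Prop :=
  ∃ a : ℕ, 0 < a ∧ ∀ m : ℕ, 0 < m → ∀ t : Fin d → ℤ,
    (Function.support c ∩ cube m t).ncard ≤ a * m

/-- A `v`-fiber: a function whose support is contained in `w + ℚv` for some `w ∈ ℤ^d`. -/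
def IsFiber {d : ℕ} (e : (Fin d → ℤ) → ℤ) (v : Fin d → ℤ) : Prop :=
  ∃ w : Fin d → ℤ, ∀ x ∈ Function.support e, ∃ q : ℚ, intVecQ x = intVecQ w + q • intVecQ v

/-- `c` is a sum of finitely many periodic `v`-fibers. -/
def FinSumPeriodicFibers {d : ℕ} (v : Fin d → ℤ) (c : (Fin d → ℤ) → ℤ) : Prop :=
  ∃ (r : ℕ) (e : Fin r → ((Fin d → ℤ) → ℤ)), c = ∑ j, e j ∧
    ∀ j, IsFiber (e j) v ∧ ∃ w : Fin d → ℤ, w ≠ 0 ∧ Periodic (e j) w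

end PaperFormal

namespace PaperFormal

/-- The support of a polynomial as a finset. -/
noncomputable def IsPoly.fs {d : ℕ} {f : (Fin d → ℤ) → ℤ} (hf : IsPoly f) : Finset (Fin d → ℤ) :=
  Set.Finite.toFinset (s := Function.support f) hf

lemma IsPoly.mem_fs {d : ℕ} {f : (Fin d → ℤ) → ℤ} (hf : IsPoly f) (v : Fin d → ℤ) :
    v ∈ hf.fs ↔ f v ≠ 0 :=
  Set.Finite.mem_toFinset (s := Function.support f) hf

lemma polyApplyC_eq_sum {d : ℕ} {f : (Fin d → ℤ) → ℤ} (hf : IsPoly f) (c : (Fin d → ℤ) → ℂ)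
    (u : Fin d → ℤ) : polyApplyC f c u = ∑ v ∈ hf.fs, (f v : ℂ) * c (u - v) := by
  unfold polyApplyC
  apply finsum_eq_sum_of_support_subset
  intro v hv
  have : f v ≠ 0 := by
    intro h
    apply hv
    simp [h]
  exact Finset.mem_coe.2 ((hf.mem_fs v).2 this)

lemma polyApplyC_comm {d : ℕ} {f g : (Fin d → ℤ) → ℤ} (hf : IsPoly f) (hg : IsPoly g)
    (c : (Fin d → ℤ) → ℂ) :
    polyApplyC f (polyApplyC g c) = polyApplyC g (polyApplyC f c) := by
  funext u
  simp only [polyApplyC_eq_sum hf, polyApplyC_eq_sum hg, Finset.mul_sum]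
  rw [Finset.sum_comm]
  refine Finset.sum_congr rfl fun v _ => Finset.sum_congr rfl fun w _ => ?_
  rw [sub_right_comm]
  ring

lemma exists_rec {G : Type*} (μ : G → ℕ) (F : G → (G → ℂ) → ℂ) :
    ∃ c : G → ℂ, ∀ u, c u = F u (fun u' => if μ u' < μ u then c u' else 0) := by
  let H : ∀ u : G, (∀ u', μ u' < μ u → ℂ) → ℂ :=
    fun u rec => F u (fun u' => if h : μ u' < μ u then rec u' h else 0)
  refine ⟨(measure μ).wf.fix H, fun u => ?_⟩
  rw [WellFounded.fix_eq]
  simp only [H, dite_eq_ite]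

/-- Induction out of the slab `0 ≤ ℓ u < N`. -/
lemma slab_induction {G : Type*} (ℓ : G → ℤ) (N : ℤ) (P : G → Prop)
    (h0 : ∀ u, 0 ≤ ℓ u → ℓ u < N → P u)
    (hp : ∀ u, N ≤ ℓ u → (∀ u', ℓ u - N ≤ ℓ u' → ℓ u' < ℓ u → P u') → P u)
    (hm : ∀ u, ℓ u < 0 → (∀ u', ℓ u < ℓ u' → ℓ u' ≤ ℓ u + N → P u') → P u) (u : G) : P u := by
  have key : ∀ n : ℕ, ∀ u, (ℓ u - N + 1).toNat + (- ℓ u).toNat = n → P u := by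
    intro n
    induction n using Nat.strong_induction_on with
    | _ n ih =>
      intro u hu
      rcases lt_or_ge (ℓ u) 0 with h | h
      · apply hm u h
        intro u' h1 h2
        exact ih _ (by omega) u' rfl
      · rcases lt_or_ge (ℓ u) N with h' | h'
        · exact h0 u h h'
        · apply hp u h'
          intro u' h1 h2
          exact ih _ (by omega) u' rfl
  exact key _ u rfl

lemma poly_isolate {d : ℕ} {f : (Fin d → ℤ) → ℤ} (hf : IsPoly f) (c : (Fin d → ℤ) → ℂ)
    (u w₀ : Fin d → ℤ) (hw : f w₀ ≠ 0) :
    polyApplyC f c (u + w₀) = (f w₀ : ℂ) * c u +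
      ∑ v ∈ hf.fs.erase w₀, (f v : ℂ) * c (u + w₀ - v) := by
  rw [polyApplyC_eq_sum hf, ← Finset.add_sum_erase _ _ (show w₀ ∈ hf.fs from (hf.mem_fs _).2 hw)]
  simp

/-- Closure of an additive subgroup under the recursion. -/
lemma slab_closure {d : ℕ} {f : (Fin d → ℤ) → ℤ} (hf : IsPoly f) (ℓ : (Fin d → ℤ) →+ ℤ)
    (w₀ w₁ : Fin d → ℤ) (h₀ : f w₀ ≠ 0) (h₁ : f w₁ ≠ 0)
    (hmin : ∀ v, f v ≠ 0 → v ≠ w₀ → ℓ w₀ < ℓ v) (hmax : ∀ v, f v ≠ 0 → v ≠ w₁ → ℓ v < ℓ w₁)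
    (A : AddSubgroup ℂ) (hA₀ : ∀ z, (f w₀ : ℂ) * z ∈ A → z ∈ A)
    (hA₁ : ∀ z, (f w₁ : ℂ) * z ∈ A → z ∈ A) (c : (Fin d → ℤ) → ℂ)
    (hc' : ∀ u, polyApplyC f c u ∈ A)
    (hc : ∀ u, 0 ≤ ℓ u → ℓ u < ℓ w₁ - ℓ w₀ → c u ∈ A) (u : Fin d → ℤ) : c u ∈ A := by
  have hmin' : ∀ v, f v ≠ 0 → ℓ w₀ ≤ ℓ v := fun v hv => by
    by_cases h : v = w₀
    · rw [h]
    · exact (hmin v hv h).le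
  have hmax' : ∀ v, f v ≠ 0 → ℓ v ≤ ℓ w₁ := fun v hv => by
    by_cases h : v = w₁
    · rw [h]
    · exact (hmax v hv h).le
  refine slab_induction ℓ (ℓ w₁ - ℓ w₀) (fun u => c u ∈ A) hc ?_ ?_ u
  · intro u _ ih
    apply hA₀
    have := poly_isolate hf c u w₀ h₀
    rw [← sub_eq_iff_eq_add] at this
    rw [← this]
    refine A.sub_mem (hc' _) (A.sum_mem fun v hv => ?_)
    simp only [Finset.mem_erase, IsPoly.mem_fs] at hv
    rw [← zsmul_eq_mul]
    refine A.zsmul_mem (ih _ ?_ ?_) _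
    · have := hmax' v hv.2
      simp only [map_sub, map_add]; omega
    · have := hmin v hv.2 hv.1
      simp only [map_sub, map_add]; omega
  · intro u _ ih
    apply hA₁
    have := poly_isolate hf c u w₁ h₁
    rw [← sub_eq_iff_eq_add] at this
    rw [← this]
    refine A.sub_mem (hc' _) (A.sum_mem fun v hv => ?_)
    simp only [Finset.mem_erase, IsPoly.mem_fs] at hv
    rw [← zsmul_eq_mul]
    refine A.zsmul_mem (ih _ ?_ ?_) _
    · have := hmax v hv.2 hv.1
      simp only [map_sub, map_add]; omega
    · have := hmin' v hv.2
      simp only [map_sub, map_add]; omega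

lemma slab_exists {d : ℕ} {f : (Fin d → ℤ) → ℤ} (hf : IsPoly f) (ℓ : (Fin d → ℤ) →+ ℤ)
    (w₀ w₁ : Fin d → ℤ) (h₀ : f w₀ ≠ 0) (h₁ : f w₁ ≠ 0)
    (hmin : ∀ v, f v ≠ 0 → v ≠ w₀ → ℓ w₀ < ℓ v) (hmax : ∀ v, f v ≠ 0 → v ≠ w₁ → ℓ v < ℓ w₁)
    (c' : (Fin d → ℤ) → ℂ) :
    ∃ c : (Fin d → ℤ) → ℂ, polyApplyC f c = c' ∧
      ∀ u, 0 ≤ ℓ u → ℓ u < ℓ w₁ - ℓ w₀ → c u = 0 := by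
  have hmin' : ∀ v, f v ≠ 0 → ℓ w₀ ≤ ℓ v := fun v hv => by
    by_cases h : v = w₀
    · rw [h]
    · exact (hmin v hv h).le
  have hmax' : ∀ v, f v ≠ 0 → ℓ v ≤ ℓ w₁ := fun v hv => by
    by_cases h : v = w₁
    · rw [h]
    · exact (hmax v hv h).le
  have h01 := hmin' _ h₁
  let μ : (Fin d → ℤ) → ℕ := fun u => (ℓ u - (ℓ w₁ - ℓ w₀) + 1).toNat + (- ℓ u).toNat
  obtain ⟨c, hc⟩ := exists_rec μ (fun u b =>
    if 0 ≤ ℓ u ∧ ℓ u < ℓ w₁ - ℓ w₀ then 0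
    else if 0 ≤ ℓ u then
      (c' (u + w₀) - ∑ v ∈ hf.fs.erase w₀, (f v : ℂ) * b (u + w₀ - v)) / (f w₀ : ℂ)
    else
      (c' (u + w₁) - ∑ v ∈ hf.fs.erase w₁, (f v : ℂ) * b (u + w₁ - v)) / (f w₁ : ℂ))
  have h₀C : (f w₀ : ℂ) ≠ 0 := by exact_mod_cast h₀
  have h₁C : (f w₁ : ℂ) ≠ 0 := by exact_mod_cast h₁
  have hpos : ∀ u, ℓ w₁ - ℓ w₀ ≤ ℓ u → polyApplyC f c (u + w₀) = c' (u + w₀) := by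
    intro u hu
    rw [poly_isolate hf c u w₀ h₀]
    have h := hc u
    rw [if_neg (by omega), if_pos (by omega), eq_div_iff h₀C] at h
    rw [mul_comm, h, sub_add_eq_add_sub, sub_eq_iff_eq_add]
    congr 1
    refine Finset.sum_congr rfl fun v hv => ?_
    simp only [Finset.mem_erase, IsPoly.mem_fs] at hv
    beta_reduce
    rw [if_pos]
    have := hmin v hv.2 hv.1
    have := hmax' v hv.2
    simp only [μ, map_sub, map_add]; omega
  have hneg : ∀ u, ℓ u < 0 → polyApplyC f c (u + w₁) = c' (u + w₁) := by
    intro u hu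
    rw [poly_isolate hf c u w₁ h₁]
    have h := hc u
    rw [if_neg (by omega), if_neg (by omega), eq_div_iff h₁C] at h
    rw [mul_comm, h, sub_add_eq_add_sub, sub_eq_iff_eq_add]
    congr 1
    refine Finset.sum_congr rfl fun v hv => ?_
    simp only [Finset.mem_erase, IsPoly.mem_fs] at hv
    beta_reduce
    rw [if_pos]
    have := hmax v hv.2 hv.1
    have := hmin' v hv.2
    simp only [μ, map_sub, map_add]; omega
  refine ⟨c, ?_, ?_⟩
  · funext u
    rcases lt_or_ge (ℓ u) (ℓ w₁) with h | h
    · simpa using hneg (u - w₁) (by simp only [map_sub]; omega)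
    · simpa using hpos (u - w₀) (by simp only [map_sub]; omega)
  · intro u hu hu'
    rw [hc u, if_pos ⟨hu, hu'⟩]

lemma intVecQ_inj {d : ℕ} {u v : Fin d → ℤ} (h : intVecQ u = intVecQ v) : u = v := by
  funext i
  have := congrFun h i
  simpa [intVecQ] using this

lemma exists_functional {d : ℕ} (V : Submodule ℝ (Fin d → ℝ)) (v₁ v₂ : Fin d → ℤ)
    (hnp : NonParallel v₁ v₂)
    (hspan : Submodule.span ℝ {intVecR v₁, intVecR v₂} ⊓ V = ⊥) :
    ∃ (ℓ : (Fin d → ℤ) →+ ℤ) (F : (Fin d → ℚ) →ₗ[ℚ] ℚ), (∀ u, (ℓ u : ℚ) = F (intVecQ u)) ∧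
      F (intVecQ v₁) ≠ 0 ∧ F (intVecQ v₂) = 0 ∧ ∀ v, intVecR v ∈ V → F (intVecQ v) = 0 := by
  set W : Submodule ℚ (Fin d → ℚ) :=
    Submodule.span ℚ (insert (intVecQ v₂) (intVecQ '' {v | intVecR v ∈ V})) with hW
  have hv₁ : intVecQ v₁ ∉ W := by
    intro h
    rw [hW, Submodule.mem_span_insert] at h
    obtain ⟨q, z, hz, h⟩ := h
    have hzV : (fun i => (z i : ℝ)) ∈ V := by
      clear h
      induction hz using Submodule.span_induction with
      | mem x hx =>
        obtain ⟨v, hv, rfl⟩ := hx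
        have e : (fun i => ((intVecQ v i : ℚ) : ℝ)) = intVecR v := by
          funext i; simp [intVecQ, intVecR]
        rw [e]; exact hv
      | zero =>
        convert V.zero_mem using 1
        funext i; simp
      | add x y _ _ hx hy =>
        have := V.add_mem hx hy
        convert this using 1
        funext i; simp
      | smul a x _ hx =>
        have := V.smul_mem (a : ℝ) hx
        convert this using 1
        funext i; simp
    have e : (fun i => (z i : ℝ)) = intVecR v₁ - (q : ℝ) • intVecR v₂ := by
      funext i
      have := congrFun h i
      simp only [intVecQ, Pi.add_apply, Pi.smul_apply, smul_eq_mul] at this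
      simp only [intVecR, Pi.sub_apply, Pi.smul_apply, smul_eq_mul]
      have h2 : ((v₁ i : ℚ) : ℝ) = ((q * (v₂ i : ℚ) + z i : ℚ) : ℝ) := by rw [this]
      push_cast at h2
      linarith
    have hz0 : (fun i => (z i : ℝ)) ∈ (⊥ : Submodule ℝ (Fin d → ℝ)) := by
      rw [← hspan]
      refine ⟨?_, hzV⟩
      rw [e]
      exact Submodule.sub_mem _ (Submodule.subset_span (by simp))
        (Submodule.smul_mem _ _ (Submodule.subset_span (by simp)))
    have hz1 : z = 0 := by
      funext i
      have := congrFun ((Submodule.mem_bot ℝ).1 hz0) i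
      simpa using this
    rw [hz1, add_zero] at h
    have := LinearIndependent.pair_iff.1 hnp 1 (-q) (by rw [h]; simp)
    simp at this
  obtain ⟨f, hf1, hf2⟩ := Submodule.exists_le_ker_of_notMem hv₁
  set D : ℕ := ∏ i, (f (Pi.single i 1)).den with hD
  have hD0 : (D : ℚ) ≠ 0 := by
    rw [hD]; exact_mod_cast Finset.prod_ne_zero_iff.2 fun i _ => Rat.den_nz _
  have hint : ∀ i, ∃ a : ℤ, (a : ℚ) = D * f (Pi.single i 1) := by
    intro i
    obtain ⟨k, hk⟩ := Finset.dvd_prod_of_mem (fun i => (f (Pi.single i 1)).den) (Finset.mem_univ i)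
    refine ⟨k * (f (Pi.single i 1)).num, ?_⟩
    rw [hD, hk]
    push_cast
    rw [mul_comm ((f (Pi.single i 1)).den : ℚ), mul_assoc, mul_comm _ (f _), Rat.mul_den_eq_num]
  choose a ha using hint
  refine ⟨⟨⟨fun u => ∑ i, a i * u i, by simp⟩, fun x y => by
    simp [mul_add, Finset.sum_add_distrib]⟩, (D : ℚ) • f, ?_, ?_, ?_, ?_⟩
  · intro u
    have : intVecQ u = ∑ i, (u i : ℚ) • (Pi.single i 1 : Fin d → ℚ) := by
      funext j
      simp [intVecQ, Finset.sum_apply, Pi.single_apply]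
    rw [this]
    simp only [AddMonoidHom.coe_mk, ZeroHom.coe_mk, LinearMap.smul_apply, map_sum, map_smul,
      smul_eq_mul]
    push_cast
    refine Finset.sum_congr rfl fun i _ => ?_
    rw [ha]; ring
  · simp only [LinearMap.smul_apply, smul_eq_mul]
    exact mul_ne_zero hD0 hf1
  · have : f (intVecQ v₂) = 0 := hf2 (Submodule.subset_span (by simp))
    simp [this]
  · intro v hv
    have : f (intVecQ v) = 0 :=
      hf2 (Submodule.subset_span (Set.mem_insert_of_mem _ ⟨v, hv, rfl⟩))
    simp [this]

theorem lift_through_line_polynomial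
    {d : ℕ} (V : Submodule ℝ (Fin d → ℝ))
    (φ ψ : (Fin d → ℤ) → ℤ) (v₁ v₂ : Fin d → ℤ)
    (hφ : IsLinePoly φ v₁) (hψ : IsLinePoly ψ v₂)
    (hnp : NonParallel v₁ v₂)
    (hspan : Submodule.span ℝ {intVecR v₁, intVecR v₂} ⊓ V = ⊥)
    (c' : (Fin d → ℤ) → ℂ) (hc'V : VPeriodicC V c') (hc'ann : polyApplyC ψ c' = 0) :
    (∃ c : (Fin d → ℤ) → ℂ,
      polyApplyC φ c = c' ∧ polyApplyC ψ c = 0 ∧ VPeriodicC V c) ∧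
    ((∀ u, ∃ z : ℤ, c' u = (z : ℂ)) → (∃ w : Fin d → ℤ, w ≠ 0 ∧ φ = diffPoly w) →
      ∃ c : (Fin d → ℤ) → ℂ, (∀ u, ∃ z : ℤ, c u = (z : ℂ)) ∧
        polyApplyC φ c = c' ∧ polyApplyC ψ c = 0 ∧ VPeriodicC V c) := by
  obtain ⟨ℓ, F, hℓF, hF1, hF2, hFV⟩ := exists_functional V v₁ v₂ hnp hspan
  obtain ⟨hφp, -, hφ2, uφ, hφl⟩ := hφ
  obtain ⟨hψp, -, -, uψ, hψl⟩ := hψ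
  have hinj : ∀ x y, φ x ≠ 0 → φ y ≠ 0 → ℓ x = ℓ y → x = y := by
    intro x y hx hy hxy
    obtain ⟨q, hq⟩ := hφl x hx
    obtain ⟨r, hr⟩ := hφl y hy
    have h : (ℓ x : ℚ) = ℓ y := by rw [hxy]
    rw [hℓF, hℓF, hq, hr] at h
    simp only [map_add, map_smul, smul_eq_mul, add_right_inj] at h
    have := mul_right_cancel₀ hF1 h
    exact intVecQ_inj (by rw [hq, hr, this])
  have hψc : ∀ x, ψ x ≠ 0 → ℓ x = ℓ uψ := by
    intro x hx
    obtain ⟨q, hq⟩ := hψl x hx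
    have h := hℓF x
    rw [hq, map_add, map_smul, hF2, smul_zero, add_zero, ← hℓF] at h
    exact_mod_cast h
  have hne : hφp.fs.Nonempty := by
    have h : (Function.support φ).Nonempty := by
      by_contra h
      rw [Set.not_nonempty_iff_eq_empty] at h
      rw [h] at hφ2
      simp at hφ2
    obtain ⟨x, hx⟩ := h
    exact ⟨x, (hφp.mem_fs x).2 hx⟩
  obtain ⟨w₀, hw₀, hmin⟩ := hφp.fs.exists_min_image ℓ hne
  obtain ⟨w₁, hw₁, hmax⟩ := hφp.fs.exists_max_image ℓ hne
  simp only [IsPoly.mem_fs] at hw₀ hmin hw₁ hmax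
  have hmin' : ∀ v, φ v ≠ 0 → v ≠ w₀ → ℓ w₀ < ℓ v := fun v hv hv' =>
    lt_of_le_of_ne (hmin v hv) fun h => hv' (hinj _ _ hw₀ hv h).symm
  have hmax' : ∀ v, φ v ≠ 0 → v ≠ w₁ → ℓ v < ℓ w₁ := fun v hv hv' =>
    lt_of_le_of_ne (hmax v hv) fun h => hv' (hinj _ _ hv hw₁ h)
  have h₀C : (φ w₀ : ℂ) ≠ 0 := by exact_mod_cast hw₀
  have h₁C : (φ w₁ : ℂ) ≠ 0 := by exact_mod_cast hw₁
  have huniq : ∀ b : (Fin d → ℤ) → ℂ, polyApplyC φ b = 0 →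
      (∀ u, 0 ≤ ℓ u → ℓ u < ℓ w₁ - ℓ w₀ → b u = 0) → b = 0 := by
    intro b hb hb'
    funext u
    have := slab_closure hφp ℓ w₀ w₁ hw₀ hw₁ hmin' hmax' ⊥
      (fun z hz => by simpa [h₀C] using hz) (fun z hz => by simpa [h₁C] using hz) b
      (fun u => by simp [hb]) (fun u h h' => by simp [hb' u h h']) u
    simpa using this
  obtain ⟨c, hc, hc0⟩ := slab_exists hφp ℓ w₀ w₁ hw₀ hw₁ hmin' hmax' c'
  have hψ0 : polyApplyC ψ c = 0 := by
    -- shift so that the support of `ψ` lies in the kernel of the functional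
    have h := huniq (fun u => polyApplyC ψ c (u + uψ)) ?_ ?_
    · funext u
      simpa using congrFun h (u - uψ)
    · funext u
      have h1 := congrFun (polyApplyC_comm hφp hψp c) (u + uψ)
      rw [hc, hc'ann, polyApplyC_eq_sum hφp, Pi.zero_apply] at h1
      rw [polyApplyC_eq_sum hφp, Pi.zero_apply, ← h1]
      refine Finset.sum_congr rfl fun v _ => ?_
      rw [sub_add_eq_add_sub]
    · intro u hu hu'
      beta_reduce
      rw [polyApplyC_eq_sum hψp]
      refine Finset.sum_eq_zero fun v hv => ?_
      simp only [IsPoly.mem_fs] at hv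
      have := hψc v hv
      rw [hc0 _ (by simp only [map_sub, map_add]; omega) (by simp only [map_sub, map_add]; omega),
        mul_zero]
  have hV : VPeriodicC V c := by
    intro v hv hvV
    obtain ⟨k, hk, hper⟩ := hc'V v hv hvV
    refine ⟨k, hk, ?_⟩
    have hℓv : ℓ (k • v) = 0 := by
      have h : (ℓ v : ℚ) = 0 := by rw [hℓF, hFV v hvV]
      have h' : ℓ v = 0 := by exact_mod_cast h
      rw [map_zsmul, h', smul_zero]
    have h := huniq (fun u => c (u + k • v) - c u) ?_ ?_
    · intro u
      have := congrFun h u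
      simpa [sub_eq_zero] using this
    · funext u
      have h1 : polyApplyC φ c (u + k • v) = polyApplyC φ c u := by rw [hc, hper u]
      rw [← sub_eq_zero, polyApplyC_eq_sum hφp, polyApplyC_eq_sum hφp,
        ← Finset.sum_sub_distrib] at h1
      rw [polyApplyC_eq_sum hφp, Pi.zero_apply, ← h1]
      refine Finset.sum_congr rfl fun w _ => ?_
      rw [sub_add_eq_add_sub, mul_sub]
    · intro u hu hu'
      beta_reduce
      rw [hc0 u hu hu', hc0 _ (by rw [map_add, hℓv]; omega) (by rw [map_add, hℓv]; omega), sub_zero]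
  refine ⟨⟨c, hc, hψ0, hV⟩, ?_⟩
  rintro hint ⟨w, hw, hφw⟩
  refine ⟨c, ?_, hc, hψ0, hV⟩
  have hunit : ∀ v, φ v ≠ 0 → φ v = 1 ∨ φ v = -1 := by
    intro v hv
    rw [hφw] at hv ⊢
    unfold diffPoly at hv ⊢
    split_ifs at hv ⊢ <;> simp_all
  let A : AddSubgroup ℂ := (Int.castAddHom ℂ).range
  have hAu : ∀ v, φ v ≠ 0 → ∀ z, (φ v : ℂ) * z ∈ A → z ∈ A := by
    intro v hv z hz
    rcases hunit v hv with h | h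
    · simpa [h] using hz
    · rw [h] at hz
      have := A.neg_mem hz
      simpa using this
  intro u
  have := slab_closure hφp ℓ w₀ w₁ hw₀ hw₁ hmin' hmax' A (hAu _ hw₀) (hAu _ hw₁) c
    (fun u => by
      rw [hc]
      obtain ⟨z, hz⟩ := hint u
      exact ⟨z, hz.symm⟩)
    (fun u h h' => by rw [hc0 u h h']; exact A.zero_mem) u
  obtain ⟨z, hz⟩ := this
  exact ⟨z, hz.symm⟩

end PaperFormal
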